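/- arXiv:2205.13794 — 15 statements merged into one kernel-verified Lean document; each statement's English description precedes it below -/
import Mathlib

section
/- Let R be a commutative ring, M an R-module, and a ∈ R. Then M is a-morphic if and only if there exists an R-module endomorphism ψ of M such that aM = ker(ψ) and Ann_M(a) = ψ(M). -/
/-- `M` is `a`-morphic if `M/aM ≅ Ann_M(a)` as `R`-modules, where `aM` is the image and
`Ann_M(a)` the kernel of the multiplication-by-`a` endomorphism of `M`. -/
def IsAMorphic (R : Type*) [CommRing R] (M : Type*) [AddCommGroup M] [Module R M] (a : R) : Prop :=
  Nonempty ((M ⧸ LinearMap.range (LinearMap.lsmul R M a)) ≃ₗ[R]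
    LinearMap.ker (LinearMap.lsmul R M a))

/-- `M` is weakly-morphic if it is `a`-morphic for every `a ∈ R`. -/
def IsWeaklyMorphic (R : Type*) [CommRing R] (M : Type*) [AddCommGroup M] [Module R M] : Prop :=
  ∀ a : R, IsAMorphic R M a

section QuotientEquiv

variable {R M N : Type*} [Ring R] [AddCommGroup M] [Module R M] [AddCommGroup N] [Module R N]
  {p : Submodule R M} {q : Submodule R N}

theorem ker_subtype_comp_equiv_comp_mkQ (e : (M ⧸ p) ≃ₗ[R] q) :
    LinearMap.ker (q.subtype ∘ₗ e.toLinearMap ∘ₗ p.mkQ) = p := by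
  rw [LinearMap.ker_comp_of_ker_eq_bot _ q.ker_subtype, LinearEquiv.ker_comp, Submodule.ker_mkQ]

theorem range_subtype_comp_equiv_comp_mkQ (e : (M ⧸ p) ≃ₗ[R] q) :
    LinearMap.range (q.subtype ∘ₗ e.toLinearMap ∘ₗ p.mkQ) = q := by
  have range_equiv_comp_mkQ : LinearMap.range (e.toLinearMap ∘ₗ p.mkQ) = ⊤ := by
    rw [LinearMap.range_comp_of_range_eq_top _ p.range_mkQ, LinearEquiv.range]
  rw [LinearMap.range_comp_of_range_eq_top _ range_equiv_comp_mkQ, Submodule.range_subtype]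

theorem nonempty_quotient_equiv_iff_exists_eq_ker_and_eq_range :
    Nonempty ((M ⧸ p) ≃ₗ[R] q) ↔
      ∃ f : M →ₗ[R] N, p = LinearMap.ker f ∧ q = LinearMap.range f := by
  constructor
  · rintro ⟨e⟩
    exact ⟨q.subtype ∘ₗ e.toLinearMap ∘ₗ p.mkQ, (ker_subtype_comp_equiv_comp_mkQ e).symm,
      (range_subtype_comp_equiv_comp_mkQ e).symm⟩
  · rintro ⟨f, rfl, rfl⟩
    exact ⟨f.quotKerEquivRange⟩

end QuotientEquiv

theorem stmt_0 (R : Type*) [CommRing R] (M : Type*) [AddCommGroup M] [Module R M] (a : R) :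
    IsAMorphic R M a ↔
      ∃ ψ : M →ₗ[R] M,
        LinearMap.range (LinearMap.lsmul R M a) = LinearMap.ker ψ ∧
        LinearMap.ker (LinearMap.lsmul R M a) = LinearMap.range ψ :=
  nonempty_quotient_equiv_iff_exists_eq_ker_and_eq_range
end

section
/- Let R be a commutative ring, a ∈ R, and let M be an a-morphic R-module. Then the following are equivalent: (1) Ann_M(a) = 0; (2) aM = M; (3) the multiplication endomorphism φ_a is an automorphism of M (i.e. bijective). -/
theorem eq_bot_iff_eq_top_of_quotient_equiv {R M N : Type*} [Ring R]
    [AddCommGroup M] [Module R M] [AddCommMonoid N] [Module R N]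
    {P : Submodule R M} {Q : Submodule R N} (e : (M ⧸ P) ≃ Q) : Q = ⊥ ↔ P = ⊤ :=
  calc
    Q = ⊥ ↔ Subsingleton Q := Submodule.subsingleton_iff_eq_bot.symm
    _ ↔ Subsingleton (M ⧸ P) := e.subsingleton_congr.symm
    _ ↔ P = ⊤ := Submodule.Quotient.subsingleton_iff

theorem stmt_1_general {R M N : Type*} [Ring R] [AddCommGroup M] [Module R M]
    [AddCommGroup N] [Module R N] (f : M →ₗ[R] N)
    (e : (N ⧸ LinearMap.range f) ≃ LinearMap.ker f) :
    List.TFAE [LinearMap.ker f = ⊥, LinearMap.range f = ⊤, Function.Bijective f] := by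
  have ker_iff_range : LinearMap.ker f = ⊥ ↔ LinearMap.range f = ⊤ :=
    eq_bot_iff_eq_top_of_quotient_equiv e
  tfae_have 1 ↔ 2 := ker_iff_range
  tfae_have 1 → 3 := fun hker =>
    ⟨LinearMap.ker_eq_bot.mp hker, LinearMap.range_eq_top.mp (ker_iff_range.mp hker)⟩
  tfae_have 3 → 1 := fun hbij => LinearMap.ker_eq_bot.mpr hbij.injective
  tfae_finish

theorem stmt_1 (R : Type*) [CommRing R] (M : Type*) [AddCommGroup M] [Module R M] (a : R)
    (h : IsAMorphic R M a) :
    List.TFAE [LinearMap.ker (LinearMap.lsmul R M a) = ⊥,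
      LinearMap.range (LinearMap.lsmul R M a) = ⊤,
      Function.Bijective (LinearMap.lsmul R M a)] := by
  obtain ⟨e⟩ := h
  exact stmt_1_general (LinearMap.lsmul R M a) e.toEquiv
end

section
/- Let R be an Artinian commutative ring, M an R-module, and a ∈ R. If Ann_M(a) = 0, then M is a-morphic; likewise, if aM = M, then M is a-morphic. (In either case the multiplication endomorphism φ_a is in fact an automorphism of M.) -/
/-!
In an Artinian ring the chain `(a) ⊇ (a²) ⊇ ⋯` stabilizes, so `aⁿ = aⁿ⁺¹b` for some `n` and `b`.
If `a` acts injectively on `M`, then so does `aⁿ`, and cancelling it from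
`aⁿ • (a • b • m) = aⁿ • m` exhibits `b • m` as a preimage of `m`. If `a` acts surjectively, then
so does `aⁿ`, and on elements `aⁿ • z` the scalar `b` undoes the action of `a`. Either way `a` acts
bijectively, and `M/aM` and `Ann_M(a)` both vanish.
-/

open Function

section MulAction

variable {S X : Type*} [Monoid S] [MulAction S X] {s t : S} {n : ℕ}

theorem surjective_smul_of_pow_succ_mul_eq_pow (h : s ^ (n + 1) * t = s ^ n)
    (hs : IsSMulRegular X s) : Surjective (s • · : X → X) := by
  intro x
  refine ⟨t • x, hs.pow n ?_⟩
  calc s ^ n • s • t • x = (s ^ (n + 1) * t) • x := by simp only [pow_succ, mul_smul]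
    _ = s ^ n • x := by rw [h]

theorem isSMulRegular_of_mul_pow_succ_eq_pow (h : t * s ^ (n + 1) = s ^ n)
    (hs : Surjective (s • · : X → X)) : IsSMulRegular X s := by
  have hsn : Surjective (s ^ n • · : X → X) := smul_iterate (α := X) s n ▸ hs.iterate n
  have left_inv : LeftInverse (t • · : X → X) (s • ·) := by
    intro x
    obtain ⟨z, rfl⟩ := hsn x
    calc t • s • s ^ n • z = (t * s ^ (n + 1)) • z := by simp only [pow_succ', mul_smul]
      _ = s ^ n • z := by rw [h]
  exact left_inv.injective

end MulAction

theorem isAMorphic_of_bijective_lsmul {R M : Type*} [CommRing R] [AddCommGroup M] [Module R M]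
    {a : R} (h : Bijective (LinearMap.lsmul R M a)) : IsAMorphic R M a := by
  rw [IsAMorphic, LinearMap.ker_eq_bot.2 h.injective, LinearMap.range_eq_top.2 h.surjective]
  exact ⟨LinearEquiv.ofSubsingleton _ _⟩

theorem exists_pow_succ_dvd_pow_of_isArtinianRing {R : Type*} [CommSemiring R]
    [IsArtinianRing R] (a : R) : ∃ n : ℕ, a ^ (n + 1) ∣ a ^ n := by
  obtain ⟨n, b, h⟩ := IsArtinian.exists_pow_succ_smul_dvd a (1 : R)
  exact ⟨n, b, by simpa using h.symm⟩

theorem stmt_2_general {R M : Type*} [CommRing R] [AddCommGroup M] [Module R M] {a : R} {n : ℕ}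
    (ha : a ^ (n + 1) ∣ a ^ n) :
    (LinearMap.ker (LinearMap.lsmul R M a) = ⊥ →
      IsAMorphic R M a ∧ Bijective (LinearMap.lsmul R M a)) ∧
    (LinearMap.range (LinearMap.lsmul R M a) = ⊤ →
      IsAMorphic R M a ∧ Bijective (LinearMap.lsmul R M a)) := by
  obtain ⟨b, hb⟩ := ha
  refine ⟨fun hker ↦ ?_, fun hrange ↦ ?_⟩
  · have inj : IsSMulRegular M a := isSMulRegular_of_ker_lsmul_eq_bot hker
    have bij : Bijective (LinearMap.lsmul R M a) :=
      ⟨inj, surjective_smul_of_pow_succ_mul_eq_pow hb.symm inj⟩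
    exact ⟨isAMorphic_of_bijective_lsmul bij, bij⟩
  · have surj : Surjective (LinearMap.lsmul R M a) := LinearMap.range_eq_top.1 hrange
    have bij : Bijective (LinearMap.lsmul R M a) :=
      ⟨isSMulRegular_of_mul_pow_succ_eq_pow ((mul_comm _ _).trans hb.symm) surj, surj⟩
    exact ⟨isAMorphic_of_bijective_lsmul bij, bij⟩

theorem stmt_2 (R : Type*) [CommRing R] [IsArtinianRing R]
    (M : Type*) [AddCommGroup M] [Module R M] (a : R) :
    (LinearMap.ker (LinearMap.lsmul R M a) = ⊥ →
      IsAMorphic R M a ∧ Function.Bijective (LinearMap.lsmul R M a)) ∧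
    (LinearMap.range (LinearMap.lsmul R M a) = ⊤ →
      IsAMorphic R M a ∧ Function.Bijective (LinearMap.lsmul R M a)) := by
  obtain ⟨n, hn⟩ := exists_pow_succ_dvd_pow_of_isArtinianRing a
  exact stmt_2_general hn
end

section
/- Let R be a Noetherian commutative ring. Then the following are equivalent: (1) R is Artinian; (2) for every R-module M and every a ∈ R with Ann_M(a) = 0, the module M is a-morphic; (3) for every R-module M and every a ∈ R with aM = M, the module M is a-morphic. -/
universe u

/-!
If `R` has Krull dimension zero, every `a ∈ R` satisfies `a ^ n * (1 - a * b) = 0` for some `n`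
and `b`, so `a` acts injectively on a module exactly when it acts surjectively, and then both
`M/aM` and `Ann_M(a)` vanish. Conversely, let `p` be prime and `a ∉ p`. Then `a` acts injectively
on `R/p` and surjectively on `κ(p)/(R/p)`, where `κ(p) = Frac (R/p)`. If it is bijective on either
module, then `a` is invertible modulo `p`; hence every prime is maximal. For a Noetherian ring,
dimension zero means Artinian.
-/

section AMorphic

variable {R : Type*} [CommRing R] {M : Type*} [AddCommGroup M] [Module R M] {a : R}

theorem isAMorphic_of_ker_eq_bot_of_range_eq_top
    (hker : LinearMap.ker (LinearMap.lsmul R M a) = ⊥)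
    (hrange : LinearMap.range (LinearMap.lsmul R M a) = ⊤) : IsAMorphic R M a := by
  have : Subsingleton (M ⧸ LinearMap.range (LinearMap.lsmul R M a)) :=
    Submodule.Quotient.subsingleton_iff.2 hrange
  have : Subsingleton (LinearMap.ker (LinearMap.lsmul R M a)) :=
    Submodule.subsingleton_iff_eq_bot.2 hker
  exact ⟨0⟩

theorem IsAMorphic.ker_eq_bot_iff_range_eq_top (h : IsAMorphic R M a) :
    LinearMap.ker (LinearMap.lsmul R M a) = ⊥ ↔ LinearMap.range (LinearMap.lsmul R M a) = ⊤ := by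
  obtain ⟨e⟩ := h
  rw [← Submodule.subsingleton_iff_eq_bot, ← Submodule.Quotient.subsingleton_iff]
  exact e.symm.toEquiv.subsingleton_congr

end AMorphic

theorem isMaximal_iff_forall_notMem_exists_one_sub_mul_mem {R : Type*} [CommRing R] {I : Ideal R} :
    I.IsMaximal ↔ I ≠ ⊤ ∧ ∀ a ∉ I, ∃ b, 1 - a * b ∈ I := by
  refine ⟨fun hI => ⟨hI.ne_top, fun a ha => ?_⟩, fun ⟨hI, hinv⟩ => Ideal.isMaximal_iff.2
    ⟨(Ideal.ne_top_iff_one I).1 hI, fun J a hIJ haI haJ => ?_⟩⟩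
  · obtain ⟨b, i, hi, hbi⟩ := hI.exists_inv ha
    exact ⟨b, by rwa [← hbi, mul_comm b, add_sub_cancel_left]⟩
  · obtain ⟨b, hb⟩ := hinv a haI
    exact (J.sub_mem_iff_left (J.mul_mem_right b haJ)).1 (hIJ hb)

section KrullDimZero

variable {R : Type*} [CommRing R] [Ring.KrullDimLE 0 R]

theorem exists_pow_mul_one_sub_mul_eq_zero (a : R) :
    ∃ (n : ℕ) (b : R), a ^ n * (1 - a * b) = 0 := by
  -- Modulo a prime avoiding all `a ^ n * (1 - a * b)`, `a` is neither zero nor invertible.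
  let S : Submonoid R :=
    { carrier := {x | ∃ (n : ℕ) (b : R), a ^ n * (1 - a * b) = x}
      one_mem' := ⟨0, 0, by ring⟩
      mul_mem' := by
        rintro _ _ ⟨n, b, rfl⟩ ⟨m, c, rfl⟩
        exact ⟨n + m, b + c - a * b * c, by ring⟩ }
  by_contra hzero
  have hdisj : Disjoint ((⊥ : Ideal R) : Set R) S :=
    Set.disjoint_left.2 fun x hx hxS => hzero (Ideal.mem_bot.1 hx ▸ hxS)
  obtain ⟨p, hp, -, hpS⟩ := Ideal.exists_le_prime_disjoint ⊥ S hdisj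
  have ha : a ∉ p := fun hap => Set.disjoint_left.1 hpS hap ⟨1, 0, by ring⟩
  obtain ⟨b, hb⟩ :=
    (isMaximal_iff_forall_notMem_exists_one_sub_mul_mem.1 hp.isMaximal').2 a ha
  exact Set.disjoint_left.1 hpS hb ⟨0, b, by ring⟩

theorem ker_lsmul_eq_bot_iff_range_lsmul_eq_top {M : Type*} [AddCommGroup M] [Module R M] (a : R) :
    LinearMap.ker (LinearMap.lsmul R M a) = ⊥ ↔ LinearMap.range (LinearMap.lsmul R M a) = ⊤ := by
  obtain ⟨n, b, hab⟩ := exists_pow_mul_one_sub_mul_eq_zero a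
  rw [← isSMulRegular_iff_ker_lsmul_eq_bot, LinearMap.range_eq_top]
  constructor
  · intro hreg m
    have hm : (1 - a * b) • m = 0 :=
      (hreg.pow n).right_eq_zero_of_smul (by rw [smul_smul, hab, zero_smul])
    rw [sub_smul, one_smul, mul_smul, sub_eq_zero] at hm
    exact ⟨b • m, hm.symm⟩
  · intro hsurj
    refine isSMulRegular_iff_right_eq_zero_of_smul.2 fun m ham => ?_
    have hpow : Function.Surjective (a ^ n • · : M → M) := by
      rw [← smul_iterate]
      exact Function.Surjective.iterate hsurj n
    obtain ⟨x, rfl⟩ := hpow m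
    calc a ^ n • x
        = (a ^ n * (1 - a * b)) • x + b • a • a ^ n • x := by
          simp only [smul_smul, ← add_smul]
          congr 1
          ring
      _ = 0 := by rw [hab, ham, zero_smul, smul_zero, add_zero]

end KrullDimZero

section Quotient

variable {R : Type*} [CommRing R] {a : R}

theorem ker_lsmul_quotient_eq_bot {p : Ideal R} [p.IsPrime] (ha : a ∉ p) :
    LinearMap.ker (LinearMap.lsmul R (R ⧸ p) a) = ⊥ := by
  refine LinearMap.ker_eq_bot'.2 fun m hm => ?_
  rw [LinearMap.lsmul_apply, Algebra.smul_def, mul_eq_zero] at hm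
  exact hm.resolve_left (mt Ideal.Quotient.eq_zero_iff_mem.1 ha)

theorem exists_one_sub_mul_mem_of_range_lsmul_quotient_eq_top {I : Ideal R}
    (h : LinearMap.range (LinearMap.lsmul R (R ⧸ I) a) = ⊤) : ∃ b, 1 - a * b ∈ I := by
  obtain ⟨y, hy⟩ := LinearMap.range_eq_top.1 h 1
  obtain ⟨b, rfl⟩ := Ideal.Quotient.mk_surjective y
  exact ⟨b, Ideal.Quotient.eq.1 hy.symm⟩

theorem range_lsmul_quotient_eq_top {M : Type*} [AddCommGroup M] [Module R M]
    (h : LinearMap.range (LinearMap.lsmul R M a) = ⊤) (N : Submodule R M) :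
    LinearMap.range (LinearMap.lsmul R (M ⧸ N) a) = ⊤ := by
  refine LinearMap.range_eq_top.2 fun y => ?_
  obtain ⟨x, rfl⟩ := N.mkQ_surjective y
  obtain ⟨z, rfl⟩ := LinearMap.range_eq_top.1 h x
  exact ⟨N.mkQ z, (N.mkQ.map_smul a z).symm⟩

variable {S : Type*} [CommRing S] [Algebra R S]

theorem range_lsmul_eq_top_of_isUnit_algebraMap (ha : IsUnit (algebraMap R S a)) :
    LinearMap.range (LinearMap.lsmul R S a) = ⊤ := by
  refine LinearMap.range_eq_top.2 fun x => ?_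
  obtain ⟨s, hs⟩ := ha.exists_right_inv
  exact ⟨s * x, by rw [LinearMap.lsmul_apply, Algebra.smul_def, ← mul_assoc, hs, one_mul]⟩

theorem exists_algebraMap_mul_eq_one_of_ker_lsmul_quotient_eq_bot
    (ha : IsUnit (algebraMap R S a))
    (h : LinearMap.ker (LinearMap.lsmul R (S ⧸ LinearMap.range (Algebra.linearMap R S)) a) = ⊥) :
    ∃ b, algebraMap R S (a * b) = 1 := by
  obtain ⟨s, hs⟩ := ha.exists_right_inv
  have has : a • s = 1 := by rw [Algebra.smul_def, hs]
  have hs_range : s ∈ LinearMap.range (Algebra.linearMap R S) := by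
    rw [← Submodule.Quotient.mk_eq_zero]
    refine LinearMap.ker_eq_bot'.1 h _ ?_
    rw [LinearMap.lsmul_apply, ← Submodule.Quotient.mk_smul, has, Submodule.Quotient.mk_eq_zero]
    exact ⟨1, map_one (algebraMap R S)⟩
  obtain ⟨b, rfl⟩ := hs_range
  exact ⟨b, by rw [map_mul]; exact hs⟩

end Quotient

theorem krullDimLE_zero_of_forall_notMem_exists_one_sub_mul_mem {R : Type*} [CommRing R]
    (h : ∀ (p : Ideal R) [p.IsPrime], ∀ a ∉ p, ∃ b, 1 - a * b ∈ p) : Ring.KrullDimLE 0 R :=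
  .mk₀ fun p hp => isMaximal_iff_forall_notMem_exists_one_sub_mul_mem.2 ⟨hp.ne_top, h p⟩

theorem stmt_3_general (R : Type u) [CommRing R] :
    List.TFAE [Ring.KrullDimLE 0 R,
      ∀ (M : Type u) [AddCommGroup M] [Module R M] (a : R),
        LinearMap.ker (LinearMap.lsmul R M a) = ⊥ → IsAMorphic R M a,
      ∀ (M : Type u) [AddCommGroup M] [Module R M] (a : R),
        LinearMap.range (LinearMap.lsmul R M a) = ⊤ → IsAMorphic R M a] := by
  tfae_have 1 → 2 := fun _ M _ _ a hker => isAMorphic_of_ker_eq_bot_of_range_eq_top hker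
    ((ker_lsmul_eq_bot_iff_range_lsmul_eq_top a).1 hker)
  tfae_have 1 → 3 := fun _ M _ _ a hrange => isAMorphic_of_ker_eq_bot_of_range_eq_top
    ((ker_lsmul_eq_bot_iff_range_lsmul_eq_top a).2 hrange) hrange
  tfae_have 2 → 1 := by
    refine fun h => krullDimLE_zero_of_forall_notMem_exists_one_sub_mul_mem fun p _ a ha => ?_
    have hker := ker_lsmul_quotient_eq_bot ha
    exact exists_one_sub_mul_mem_of_range_lsmul_quotient_eq_top
      ((h (R ⧸ p) a hker).ker_eq_bot_iff_range_eq_top.1 hker)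
  tfae_have 3 → 1 := by
    refine fun h => krullDimLE_zero_of_forall_notMem_exists_one_sub_mul_mem fun p _ a ha => ?_
    have hunit : IsUnit (algebraMap R p.ResidueField a) :=
      isUnit_iff_ne_zero.2 (mt Ideal.algebraMap_residueField_eq_zero.1 ha)
    have hrange := range_lsmul_quotient_eq_top (range_lsmul_eq_top_of_isUnit_algebraMap hunit)
      (LinearMap.range (Algebra.linearMap R p.ResidueField))
    obtain ⟨b, hb⟩ := exists_algebraMap_mul_eq_one_of_ker_lsmul_quotient_eq_bot hunit
      ((h _ a hrange).ker_eq_bot_iff_range_eq_top.2 hrange)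
    refine ⟨b, Ideal.algebraMap_residueField_eq_zero.1 ?_⟩
    rw [map_sub, map_one, hb, sub_self]
  tfae_finish

theorem stmt_3 (R : Type u) [CommRing R] [IsNoetherianRing R] :
    List.TFAE [IsArtinianRing R,
      ∀ (M : Type u) [AddCommGroup M] [Module R M] (a : R),
        LinearMap.ker (LinearMap.lsmul R M a) = ⊥ → IsAMorphic R M a,
      ∀ (M : Type u) [AddCommGroup M] [Module R M] (a : R),
        LinearMap.range (LinearMap.lsmul R M a) = ⊤ → IsAMorphic R M a] := by
  rw [isArtinianRing_iff_krullDimLE_zero]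
  exact stmt_3_general R
end

section
/- Let R be a commutative ring and M an R-module. Then M is weakly-morphic if and only if for every multiplicative submonoid D ⊆ R, the localized module M_D is a weakly-morphic module over the localized ring R_D. -/
/-!
Localization is exact, so it carries `M/rM` and `Ann_M(r)` to `M_D/rM_D` and `Ann_{M_D}(r)`, and
an isomorphism between the former localizes to one between the latter. Every element of `R_D` is
the image of some `r ∈ R` up to a unit, and a unit factor of `a` changes neither `aM` nor
`Ann_M(a)`. Conversely, localizing at the trivial submonoid recovers `M` itself.
-/

open LinearMap

section Module

variable {R M N : Type*} [CommRing R] [AddCommGroup M] [Module R M] [AddCommGroup N] [Module R N]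

theorem ker_lsmul_mul_isUnit_right (a : R) {u : R} (hu : IsUnit u) :
    ker (lsmul R M (a * u)) = ker (lsmul R M a) := by
  ext m
  simp only [mem_ker, lsmul_apply, mul_comm a u, mul_smul, hu.smul_eq_zero]

theorem range_lsmul_mul_isUnit_right (a : R) {u : R} (hu : IsUnit u) :
    range (lsmul R M (a * u)) = range (lsmul R M a) := by
  have lsmul_mul : lsmul R M (a * u) = lsmul R M a ∘ₗ lsmul R M u := by
    ext m
    exact mul_smul a u m
  have lsmul_surjective : Function.Surjective (lsmul R M u) := hu.smul_bijective.surjective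
  rw [lsmul_mul, range_comp_of_range_eq_top _ (range_eq_top.mpr lsmul_surjective)]

theorem isAMorphic_mul_isUnit_right_iff (a : R) {u : R} (hu : IsUnit u) :
    IsAMorphic R M (a * u) ↔ IsAMorphic R M a := by
  rw [IsAMorphic, ker_lsmul_mul_isUnit_right a hu, range_lsmul_mul_isUnit_right a hu, IsAMorphic]

theorem IsAMorphic.of_linearEquiv {a : R} (h : IsAMorphic R M a) (e : M ≃ₗ[R] N) :
    IsAMorphic R N a := by
  have comp_lsmul : e.toLinearMap ∘ₗ lsmul R M a = lsmul R N a ∘ₗ e.toLinearMap := by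
    ext m
    exact map_smul e a m
  have map_range : (range (lsmul R M a)).map e.toLinearMap = range (lsmul R N a) := by
    rw [← range_comp, comp_lsmul, range_comp_of_range_eq_top _ e.range]
  have map_ker : (ker (lsmul R M a)).map e.toLinearMap = ker (lsmul R N a) := by
    ext n
    simp [Submodule.mem_map_equiv, ← map_smul]
  obtain ⟨φ⟩ := h
  exact ⟨(Submodule.Quotient.equiv _ _ e map_range).symm ≪≫ₗ φ ≪≫ₗ e.ofSubmodules _ _ map_ker⟩

end Module

section Algebra

variable {R S N : Type*} [CommRing R] [CommRing S] [Algebra R S]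
  [AddCommGroup N] [Module R N] [Module S N] [IsScalarTower R S N]

theorem IsAMorphic.of_algebraMap {r : R} (h : IsAMorphic S N (algebraMap R S r)) :
    IsAMorphic R N r := by
  have range_eq : range (lsmul R N r) =
      (range (lsmul S N (algebraMap R S r))).restrictScalars R := by
    ext n
    simp only [mem_range, Submodule.restrictScalars_mem, lsmul_apply, algebraMap_smul]
  have ker_eq : ker (lsmul R N r) = (ker (lsmul S N (algebraMap R S r))).restrictScalars R := by
    ext n
    simp only [mem_ker, Submodule.restrictScalars_mem, lsmul_apply, algebraMap_smul]
  obtain ⟨φ⟩ := h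
  rw [IsAMorphic, range_eq, ker_eq]
  exact ⟨Submodule.Quotient.restrictScalarsEquiv R _ ≪≫ₗ φ.restrictScalars R⟩

end Algebra

section Localization

variable {R M N : Type*} [CommRing R] (D : Submonoid R) (S : Type*) [CommRing S] [Algebra R S]
  [IsLocalization D S] [AddCommGroup M] [Module R M] [AddCommGroup N] [Module R N] [Module S N]
  [IsScalarTower R S N] (f : M →ₗ[R] N) [IsLocalizedModule D f]

theorem extendScalarsOfIsLocalization_map_lsmul (r : R) :
    (IsLocalizedModule.map D f f (lsmul R M r)).extendScalarsOfIsLocalization D S =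
      lsmul S N (algebraMap R S r) := by
  ext n
  obtain ⟨⟨m, s⟩, rfl⟩ := IsLocalizedModule.mk'_surjective D f n
  simp only [extendScalarsOfIsLocalization_apply', Function.uncurry_apply_pair,
    IsLocalizedModule.map_mk', lsmul_apply, algebraMap_smul, IsLocalizedModule.mk'_smul]

theorem localized'_ker_lsmul (r : R) :
    (ker (lsmul R M r)).localized' S D f = ker (lsmul S N (algebraMap R S r)) := by
  rw [localized'_ker_eq_ker_localizedMap S D f f, extendScalarsOfIsLocalization_map_lsmul]

theorem localized'_range_lsmul (r : R) :
    (range (lsmul R M r)).localized' S D f = range (lsmul S N (algebraMap R S r)) := by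
  rw [localized'_range_eq_range_localizedMap S D f f, extendScalarsOfIsLocalization_map_lsmul]

variable {S}

include D f

theorem IsAMorphic.of_isLocalizedModule {r : R} (h : IsAMorphic R M r) :
    IsAMorphic S N (algebraMap R S r) := by
  obtain ⟨φ⟩ := h
  rw [IsAMorphic, ← localized'_range_lsmul D S f, ← localized'_ker_lsmul D S f]
  exact ⟨IsLocalizedModule.mapEquiv D ((range (lsmul R M r)).toLocalizedQuotient' S D f)
    ((ker (lsmul R M r)).toLocalized' S D f) S φ⟩

theorem IsWeaklyMorphic.of_isLocalizedModule (h : IsWeaklyMorphic R M) : IsWeaklyMorphic S N := by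
  intro a
  obtain ⟨⟨r, s⟩, a_mul_s_eq_r⟩ := IsLocalization.surj D a
  rw [← isAMorphic_mul_isUnit_right_iff a (IsLocalization.map_units S s), a_mul_s_eq_r]
  exact (h r).of_isLocalizedModule D f

end Localization

/-- The localization of a module at the trivial submonoid is the module itself. -/
noncomputable def localizedModuleBotEquiv (R M : Type*) [CommRing R] [AddCommGroup M]
    [Module R M] : LocalizedModule (⊥ : Submonoid R) M ≃ₗ[R] M :=
  have : IsLocalization (⊥ : Submonoid R) R := .of_le_isUnit bot_le
  have : IsLocalizedModule (⊥ : Submonoid R) (.id : M →ₗ[R] M) := isLocalizedModule_id ⊥ M R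
  IsLocalizedModule.iso ⊥ .id

theorem stmt_4 (R : Type*) [CommRing R] (M : Type*) [AddCommGroup M] [Module R M] :
    IsWeaklyMorphic R M ↔
      ∀ D : Submonoid R, IsWeaklyMorphic (Localization D) (LocalizedModule D M) := by
  constructor
  · intro h D
    exact h.of_isLocalizedModule D (LocalizedModule.mkLinearMap D M)
  · intro h r
    have isAMorphic_bot : IsAMorphic R (LocalizedModule ⊥ M) r := (h ⊥ _).of_algebraMap
    exact isAMorphic_bot.of_linearEquiv (localizedModuleBotEquiv R M)
end

section
/- Let R be a commutative ring and {M_i}_{i∈I} a nonempty family of R-modules. If every M_i is a weakly-morphic R-module, then the direct product ∏_{i∈I} M_i is a weakly-morphic R-module. -/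
/-!
`M` is `a`-morphic exactly when some endomorphism `f` has kernel `aM` and image `Ann_M(a)`, that is,
when the sequence `M → M → M → M` with maps `a`, `f`, `a` is exact. Exactness of a product of
sequences is checked componentwise, so the product of such `f i` is a witness for `∏ M i`.
-/

section Exact

open Function

theorem exact_piMap {ι : Type*} {α β γ : ι → Type*} [∀ i, Zero (γ i)]
    {f : ∀ i, α i → β i} {g : ∀ i, β i → γ i} (h : ∀ i, Exact (f i) (g i)) :
    Exact (Pi.map f) (Pi.map g) := fun x => by
  rw [Set.range_piMap, Set.mem_univ_pi, funext_iff]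
  exact forall_congr' fun i => h i (x i)

theorem nonempty_quotient_range_equiv_ker_iff_exists_exact {R M N P Q : Type*} [Ring R]
    [AddCommMonoid M] [Module R M] [AddCommGroup N] [Module R N]
    [AddCommGroup P] [Module R P] [AddCommMonoid Q] [Module R Q]
    {φ : M →ₗ[R] N} {ψ : P →ₗ[R] Q} :
    Nonempty ((N ⧸ LinearMap.range φ) ≃ₗ[R] LinearMap.ker ψ) ↔
      ∃ f : N →ₗ[R] P, Exact φ f ∧ Exact f ψ := by
  constructor
  · rintro ⟨e⟩
    refine ⟨(LinearMap.ker ψ).subtype ∘ₗ e.toLinearMap ∘ₗ (LinearMap.range φ).mkQ, ?_, ?_⟩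
    · rw [LinearMap.exact_iff, LinearMap.ker_comp_of_ker_eq_bot _ (Submodule.ker_subtype _),
        LinearEquiv.ker_comp, Submodule.ker_mkQ]
    · rw [LinearMap.exact_iff, LinearMap.range_comp, LinearMap.range_comp, Submodule.range_mkQ,
        Submodule.map_top, LinearEquiv.range, Submodule.map_subtype_top]
  · rintro ⟨f, hφf, hfψ⟩
    exact ⟨Submodule.quotEquivOfEq _ _ hφf.linearMap_ker_eq.symm ≪≫ₗ f.quotKerEquivRange ≪≫ₗ
      LinearEquiv.ofEq _ _ hfψ.linearMap_ker_eq.symm⟩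

end Exact

theorem IsAMorphic.pi {R : Type*} [CommRing R] {ι : Type*} {M : ι → Type*}
    [∀ i, AddCommGroup (M i)] [∀ i, Module R (M i)] {a : R} (h : ∀ i, IsAMorphic R (M i) a) :
    IsAMorphic R (∀ i, M i) a := by
  choose f hf_ker hf_range using fun i =>
    nonempty_quotient_range_equiv_ker_iff_exists_exact.mp (h i)
  exact nonempty_quotient_range_equiv_ker_iff_exists_exact.mpr
    ⟨LinearMap.piMap f, exact_piMap hf_ker, exact_piMap hf_range⟩

theorem stmt_5 (R : Type*) [CommRing R] (I : Type*) [Nonempty I]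
    (M : I → Type*) [∀ i, AddCommGroup (M i)] [∀ i, Module R (M i)]
    (h : ∀ i, IsWeaklyMorphic R (M i)) :
    IsWeaklyMorphic R (∀ i, M i) := by
  intro a
  exact IsAMorphic.pi fun i => h i a
end

section
/- Let R be a commutative ring and {M_i}_{i∈I} a nonempty family of R-modules. If every M_i is a weakly-morphic R-module, then the direct sum ⊕_{i∈I} M_i is a weakly-morphic R-module. -/
/-! An isomorphism `M/aM ≅ Ann_M(a)` amounts to an endomorphism of `M` with kernel `aM` and image
`Ann_M(a)`. Such endomorphisms of the summands add up to one of the direct sum, because kernels and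
images of a direct sum of maps are computed componentwise. -/

open scoped DirectSum

section CokernelEquivKernel

variable {R : Type*} [Ring R]

theorem nonempty_quotient_linearEquiv_iff {M N : Type*} [AddCommGroup M] [Module R M]
    [AddCommGroup N] [Module R N] {P : Submodule R M} {Q : Submodule R N} :
    Nonempty ((M ⧸ P) ≃ₗ[R] Q) ↔
      ∃ g : M →ₗ[R] N, LinearMap.ker g = P ∧ LinearMap.range g = Q := by
  constructor
  · rintro ⟨e⟩
    refine ⟨Q.subtype ∘ₗ e.toLinearMap ∘ₗ P.mkQ, ?_, ?_⟩
    · rw [LinearMap.ker_comp_of_ker_eq_bot _ Q.ker_subtype,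
        LinearMap.ker_comp_of_ker_eq_bot _ e.ker, P.ker_mkQ]
    · rw [← LinearMap.comp_assoc, LinearMap.range_comp_of_range_eq_top _ P.range_mkQ,
        LinearMap.range_comp_of_range_eq_top _ e.range, Q.range_subtype]
  · rintro ⟨g, rfl, rfl⟩
    exact ⟨g.quotKerEquivRange⟩

theorem nonempty_quotient_range_lmap_linearEquiv_ker_lmap {ι : Type*} {L M N P : ι → Type*}
    [∀ i, AddCommMonoid (L i)] [∀ i, Module R (L i)] [∀ i, AddCommGroup (M i)]
    [∀ i, Module R (M i)] [∀ i, AddCommGroup (N i)] [∀ i, Module R (N i)]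
    [∀ i, AddCommMonoid (P i)] [∀ i, Module R (P i)]
    {f : ∀ i, L i →ₗ[R] M i} {g : ∀ i, N i →ₗ[R] P i}
    (h : ∀ i, Nonempty ((M i ⧸ LinearMap.range (f i)) ≃ₗ[R] LinearMap.ker (g i))) :
    Nonempty (((⨁ i, M i) ⧸ LinearMap.range (DirectSum.lmap f)) ≃ₗ[R]
      LinearMap.ker (DirectSum.lmap g)) := by
  choose u hker hrange using fun i ↦ nonempty_quotient_linearEquiv_iff.mp (h i)
  refine nonempty_quotient_linearEquiv_iff.mpr ⟨DirectSum.lmap u, ?_, ?_⟩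
  · simp only [DirectSum.ker_lmap, DirectSum.range_lmap, hker]
  · simp only [DirectSum.ker_lmap, DirectSum.range_lmap, hrange]

end CokernelEquivKernel

theorem lsmul_directSum_eq_lmap {R : Type*} [CommSemiring R] {ι : Type*} (M : ι → Type*)
    [∀ i, AddCommMonoid (M i)] [∀ i, Module R (M i)] (a : R) :
    LinearMap.lsmul R (⨁ i, M i) a = DirectSum.lmap fun i ↦ LinearMap.lsmul R (M i) a :=
  rfl

theorem IsAMorphic.directSum {R : Type*} [CommRing R] {ι : Type*} {M : ι → Type*}
    [∀ i, AddCommGroup (M i)] [∀ i, Module R (M i)] {a : R} (h : ∀ i, IsAMorphic R (M i) a) :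
    IsAMorphic R (⨁ i, M i) a := by
  rw [IsAMorphic, lsmul_directSum_eq_lmap]
  exact nonempty_quotient_range_lmap_linearEquiv_ker_lmap h

theorem stmt_6 (R : Type*) [CommRing R] (I : Type*) [Nonempty I] [DecidableEq I]
    (M : I → Type*) [∀ i, AddCommGroup (M i)] [∀ i, Module R (M i)]
    (h : ∀ i, IsWeaklyMorphic R (M i)) :
    IsWeaklyMorphic R (DirectSum I M) :=
  fun a ↦ IsAMorphic.directSum fun i ↦ h i a
end

section
/- Let R₁ and R₂ be commutative rings, M₁ an R₁-module and M₂ an R₂-module. Then M₁ × M₂, viewed as a module over the product ring R₁ × R₂ with componentwise action, is weakly-morphic if and only if M₁ is a weakly-morphic R₁-module and M₂ is a weakly-morphic R₂-module. -/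
section

variable (R₁ R₂ : Type*) [CommRing R₁] [CommRing R₂]
variable (M₁ M₂ : Type*) [AddCommGroup M₁] [Module R₁ M₁] [AddCommGroup M₂] [Module R₂ M₂]

/-- The componentwise action of the product ring `R₁ × R₂` on `M₁ × M₂`:
`(m₁, m₂) • (a₁, a₂) = (m₁ • a₁, m₂ • a₂)`. -/
instance Prod.moduleProd : Module (R₁ × R₂) (M₁ × M₂) where
  smul a m := (a.1 • m.1, a.2 • m.2)
  one_smul m := Prod.ext (one_smul _ _) (one_smul _ _)
  mul_smul a b m := Prod.ext (mul_smul _ _ _) (mul_smul _ _ _)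
  smul_zero a := Prod.ext (smul_zero _) (smul_zero _)
  smul_add a m n := Prod.ext (smul_add _ _ _) (smul_add _ _ _)
  add_smul a b m := Prod.ext (add_smul _ _ _) (add_smul _ _ _)
  zero_smul m := Prod.ext (zero_smul _ _) (zero_smul _ _)

/-!
Splicing the isomorphism `M/aM ≅ Ann_M(a)` between the projection `M → M/aM` and the inclusion
`Ann_M(a) → M` shows that `M` is `a`-morphic exactly when some endomorphism `f` makes
`M → M → M → M`, with maps `a`, `f`, `a`, exact. Over `R₁ × R₂`, commuting with the idempotents
`(1, 0)` and `(0, 1)` forces every linear map between products to be diagonal, and a diagonal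
sequence is exact precisely when both of its components are.
-/

theorem nonempty_quotRange_linearEquiv_ker_iff {R M N P Q : Type*} [Ring R]
    [AddCommGroup M] [AddCommGroup N] [AddCommGroup P] [AddCommGroup Q]
    [Module R M] [Module R N] [Module R P] [Module R Q] (g : M →ₗ[R] N) (h : P →ₗ[R] Q) :
    Nonempty ((N ⧸ LinearMap.range g) ≃ₗ[R] LinearMap.ker h) ↔
      ∃ f : N →ₗ[R] P, Function.Exact g f ∧ Function.Exact f h := by
  constructor
  · rintro ⟨e⟩
    refine ⟨(LinearMap.ker h).subtype ∘ₗ (e : _ →ₗ[R] _) ∘ₗ (LinearMap.range g).mkQ, ?_, ?_⟩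
    · rw [(Submodule.subtype_injective _).comp_exact_iff_exact,
        LinearEquiv.postcomp_exact_iff_exact]
      exact g.exact_map_mkQ_range
    · rw [(e.surjective.comp (Submodule.mkQ_surjective _)).comp_exact_iff_exact]
      exact h.exact_subtype_ker_map
  · rintro ⟨f, hgf, hfh⟩
    exact ⟨Submodule.quotEquivOfEq _ _ hgf.linearMap_ker_eq.symm ≪≫ₗ f.quotKerEquivRange ≪≫ₗ
      LinearEquiv.ofEq _ _ hfh.linearMap_ker_eq.symm⟩

theorem isAMorphic_iff_exists_exact {R M : Type*} [CommRing R] [AddCommGroup M] [Module R M]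
    (a : R) :
    IsAMorphic R M a ↔ ∃ f : M →ₗ[R] M,
      Function.Exact (LinearMap.lsmul R M a) f ∧ Function.Exact f (LinearMap.lsmul R M a) :=
  nonempty_quotRange_linearEquiv_ker_iff _ _

theorem exact_iff_range_eq_preimage_zero {α β γ : Type*} [Zero γ] {f : α → β} {g : β → γ} :
    Function.Exact f g ↔ Set.range f = g ⁻¹' {0} :=
  Set.ext_iff.symm.trans eq_comm

theorem exact_prodMap_iff {α₁ α₂ β₁ β₂ γ₁ γ₂ : Type*} [Nonempty α₁] [Nonempty α₂]
    [Zero γ₁] [Zero γ₂] {f₁ : α₁ → β₁} {f₂ : α₂ → β₂} {g₁ : β₁ → γ₁} {g₂ : β₂ → γ₂} :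
    Function.Exact (Prod.map f₁ f₂) (Prod.map g₁ g₂) ↔
      Function.Exact f₁ g₁ ∧ Function.Exact f₂ g₂ := by
  simp only [exact_iff_range_eq_preimage_zero, Set.range_prodMap, ← Prod.mk_zero_zero,
    ← Set.singleton_prod_singleton, Set.preimage_prod_map_prod]
  exact Set.prod_eq_prod_iff_of_nonempty ((Set.range_nonempty f₁).prod (Set.range_nonempty f₂))

section

variable {R₁ R₂ : Type*} [CommRing R₁] [CommRing R₂]
variable {M₁ M₂ N₁ N₂ : Type*} [AddCommGroup M₁] [AddCommGroup M₂] [AddCommGroup N₁]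
  [AddCommGroup N₂] [Module R₁ M₁] [Module R₂ M₂] [Module R₁ N₁] [Module R₂ N₂]

/-- The diagonal map `(x, y) ↦ (f₁ x, f₂ y)`, linear over the product ring. Unlike
`LinearMap.prodMap`, its two components are linear over different rings. -/
def prodRingMap (f₁ : M₁ →ₗ[R₁] N₁) (f₂ : M₂ →ₗ[R₂] N₂) : M₁ × M₂ →ₗ[R₁ × R₂] N₁ × N₂ where
  toFun := Prod.map f₁ f₂
  map_add' x y := Prod.ext (f₁.map_add x.1 y.1) (f₂.map_add x.2 y.2)
  map_smul' r x := Prod.ext (f₁.map_smul r.1 x.1) (f₂.map_smul r.2 x.2)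

theorem coe_prodRingMap (f₁ : M₁ →ₗ[R₁] N₁) (f₂ : M₂ →ₗ[R₂] N₂) :
    ⇑(prodRingMap f₁ f₂) = Prod.map f₁ f₂ :=
  rfl

theorem prodRing_smul_def (r : R₁ × R₂) (x : M₁ × M₂) : r • x = (r.1 • x.1, r.2 • x.2) :=
  rfl

theorem lsmul_prodRing (a : R₁ × R₂) :
    LinearMap.lsmul (R₁ × R₂) (M₁ × M₂) a =
      prodRingMap (LinearMap.lsmul R₁ M₁ a.1) (LinearMap.lsmul R₂ M₂ a.2) :=
  rfl

theorem exists_prodRingMap_eq (f : M₁ × M₂ →ₗ[R₁ × R₂] N₁ × N₂) :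
    ∃ (f₁ : M₁ →ₗ[R₁] N₁) (f₂ : M₂ →ₗ[R₂] N₂), prodRingMap f₁ f₂ = f := by
  have map_smul_fst (r : R₁) (x : M₁ × M₂) : f (r • x.1, 0) = (r • (f x).1, 0) := by
    simpa only [prodRing_smul_def, zero_smul] using f.map_smul (r, 0) x
  have map_smul_snd (r : R₂) (x : M₁ × M₂) : f (0, r • x.2) = (0, r • (f x).2) := by
    simpa only [prodRing_smul_def, zero_smul] using f.map_smul (0, r) x
  let f₁ : M₁ →ₗ[R₁] N₁ :=
    { (AddMonoidHom.fst N₁ N₂).comp ((f : M₁ × M₂ →+ N₁ × N₂).comp (.inl M₁ M₂)) with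
      map_smul' := fun r x => congrArg Prod.fst (map_smul_fst r (x, 0)) }
  let f₂ : M₂ →ₗ[R₂] N₂ :=
    { (AddMonoidHom.snd N₁ N₂).comp ((f : M₁ × M₂ →+ N₁ × N₂).comp (.inr M₁ M₂)) with
      map_smul' := fun r x => congrArg Prod.snd (map_smul_snd r (0, x)) }
  refine ⟨f₁, f₂, LinearMap.ext fun x => Prod.ext ?_ ?_⟩
  · change (f (x.1, 0)).1 = (f x).1
    simpa only [one_smul] using congrArg Prod.fst (map_smul_fst 1 x)
  · change (f (0, x.2)).2 = (f x).2
    simpa only [one_smul] using congrArg Prod.snd (map_smul_snd 1 x)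

theorem isAMorphic_prod_iff (a : R₁ × R₂) :
    IsAMorphic (R₁ × R₂) (M₁ × M₂) a ↔ IsAMorphic R₁ M₁ a.1 ∧ IsAMorphic R₂ M₂ a.2 := by
  simp only [isAMorphic_iff_exists_exact, lsmul_prodRing]
  constructor
  · rintro ⟨f, haf, hfa⟩
    obtain ⟨f₁, f₂, rfl⟩ := exists_prodRingMap_eq f
    simp only [coe_prodRingMap, exact_prodMap_iff] at haf hfa
    exact ⟨⟨f₁, haf.1, hfa.1⟩, ⟨f₂, haf.2, hfa.2⟩⟩
  · rintro ⟨⟨f₁, haf₁, hfa₁⟩, ⟨f₂, haf₂, hfa₂⟩⟩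
    exact ⟨prodRingMap f₁ f₂, exact_prodMap_iff.2 ⟨haf₁, haf₂⟩, exact_prodMap_iff.2 ⟨hfa₁, hfa₂⟩⟩

end

theorem stmt_8 :
    IsWeaklyMorphic (R₁ × R₂) (M₁ × M₂) ↔
      IsWeaklyMorphic R₁ M₁ ∧ IsWeaklyMorphic R₂ M₂ := by
  simp only [IsWeaklyMorphic, isAMorphic_prod_iff, Prod.forall, forall_and_left, forall_and_right]

end
end

section
/- Let R be a commutative ring and M an R-module. Then the following are equivalent: (1) for every a ∈ R the endomorphism φ_a is a regular element of End_R(M), i.e. there exists ψ ∈ End_R(M) with φ_a = φ_a ∘ ψ ∘ φ_a; (2) M = aM ⊕ Ann_M(a) (internal direct sum) for every a ∈ R; (3) for every a ∈ R, both aM and Ann_M(a) are direct summands of M. Moreover, each of these conditions implies that M is weakly-morphic. -/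
/-!
Multiplication by a scalar is a central endomorphism. If `ψ` is an inner inverse of a central
endomorphism `φ`, then `φ * ψ = ψ * φ` is an idempotent with the same image and kernel as `φ`, so
these are complementary. Conversely, complements of the kernel and of the image give an inner
inverse of any linear map, central or not: the map is invertible from a complement of its kernel
onto its image, and this inverse extends by zero along a complement of the image.
-/

section

variable {R M N : Type*} [Ring R] [AddCommGroup M] [Module R M] [AddCommGroup N] [Module R N]

theorem exists_eq_comp_comp_of_isComplemented {f : M →ₗ[R] N} (hrange : IsComplemented f.range)
    (hker : IsComplemented f.ker) : ∃ g : N →ₗ[R] M, f = f ∘ₗ g ∘ₗ f := by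
  obtain ⟨C, hC⟩ := hker
  let e : C ≃ₗ[R] f.range := f.kerComplementEquivRange hC.symm
  obtain ⟨g, hg : g ∘ₗ f.range.subtype = C.subtype ∘ₗ e.symm.toLinearMap⟩ :=
    LinearMap.surjective_comp_subtype_of_isComplemented hrange (C.subtype ∘ₗ e.symm.toLinearMap)
  refine ⟨g, LinearMap.ext fun x => ?_⟩
  have hgx : g (f x) = e.symm (f.rangeRestrict x) := LinearMap.congr_fun hg (f.rangeRestrict x)
  calc f x = e (e.symm (f.rangeRestrict x)) := by rw [e.apply_symm_apply]; rfl
    _ = f (e.symm (f.rangeRestrict x)) := rfl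
    _ = f (g (f x)) := by rw [hgx]

theorem isCompl_range_ker_of_eq_mul_mul_of_commute {f g : Module.End R M}
    (hfg : f = f * g * f) (hcomm : Commute f g) : IsCompl f.range f.ker := by
  have hidem : IsIdempotentElem (f * g) := by
    rw [IsIdempotentElem, ← mul_assoc, ← hfg]
  have hrange : f.range = (f * g).range := by
    refine le_antisymm ?_ (LinearMap.range_comp_le_range g f)
    conv_lhs => rw [hfg]
    exact LinearMap.range_comp_le_range f (f * g)
  have hker : f.ker = (f * g).ker := by
    refine le_antisymm (hcomm.eq ▸ LinearMap.ker_le_ker_comp f g) ?_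
    conv_rhs => rw [hfg, mul_assoc, ← hcomm.eq]
    exact LinearMap.ker_le_ker_comp (f * g) f
  rw [hrange, hker]
  exact LinearMap.IsIdempotentElem.isCompl hidem

theorem stmt_9_general {f : Module.End R M} (hf : f ∈ Set.center (Module.End R M)) :
    ((∃ ψ : M →ₗ[R] M, f = f ∘ₗ ψ ∘ₗ f) ↔ IsCompl f.range f.ker) ∧
    (IsCompl f.range f.ker ↔ IsComplemented f.range ∧ IsComplemented f.ker) ∧
    (IsComplemented f.range ∧ IsComplemented f.ker → Nonempty ((M ⧸ f.range) ≃ₗ[R] f.ker)) := by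
  have compl_of_inner : (∃ ψ : M →ₗ[R] M, f = f ∘ₗ ψ ∘ₗ f) → IsCompl f.range f.ker :=
    fun ⟨ψ, hψ⟩ => isCompl_range_ker_of_eq_mul_mul_of_commute hψ (hf.comm ψ)
  have complemented_of_compl (h : IsCompl f.range f.ker) :
      IsComplemented f.range ∧ IsComplemented f.ker := ⟨⟨_, h⟩, ⟨_, h.symm⟩⟩
  have inner_of_complemented (h : IsComplemented f.range ∧ IsComplemented f.ker) :
      ∃ ψ : M →ₗ[R] M, f = f ∘ₗ ψ ∘ₗ f := exists_eq_comp_comp_of_isComplemented h.1 h.2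
  exact ⟨⟨compl_of_inner, inner_of_complemented ∘ complemented_of_compl⟩,
    ⟨complemented_of_compl, compl_of_inner ∘ inner_of_complemented⟩,
    fun h => ⟨Submodule.quotientEquivOfIsCompl _ _ (compl_of_inner (inner_of_complemented h))⟩⟩

end

theorem stmt_9 (R : Type*) [CommRing R] (M : Type*) [AddCommGroup M] [Module R M] :
    ((∀ a : R, ∃ ψ : M →ₗ[R] M,
        LinearMap.lsmul R M a = LinearMap.lsmul R M a ∘ₗ ψ ∘ₗ LinearMap.lsmul R M a) ↔
      (∀ a : R, IsCompl (LinearMap.range (LinearMap.lsmul R M a))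
        (LinearMap.ker (LinearMap.lsmul R M a)))) ∧
    ((∀ a : R, IsCompl (LinearMap.range (LinearMap.lsmul R M a))
        (LinearMap.ker (LinearMap.lsmul R M a))) ↔
      (∀ a : R, (∃ N, IsCompl (LinearMap.range (LinearMap.lsmul R M a)) N) ∧
        ∃ N, IsCompl (LinearMap.ker (LinearMap.lsmul R M a)) N)) ∧
    ((∀ a : R, (∃ N, IsCompl (LinearMap.range (LinearMap.lsmul R M a)) N) ∧
        ∃ N, IsCompl (LinearMap.ker (LinearMap.lsmul R M a)) N) →
      IsWeaklyMorphic R M) := by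
  have equivalences (a : R) :=
    stmt_9_general (f := LinearMap.lsmul R M a) (Set.algebraMap_mem_center a)
  exact ⟨forall_congr' fun a => (equivalences a).1,
    forall_congr' fun a => (equivalences a).2.1, fun h a => (equivalences a).2.2 (h a)⟩
end

section
/- Let R be a von Neumann regular commutative ring (for every a ∈ R there exists x ∈ R with a = a·x·a). Then every R-module is weakly-morphic. -/
/-!
If `f` is an endomorphism with a quasi-inverse `g`, that is `f g f = f`, then `f g` is idempotent
with the image of `f` and `g f` is idempotent with the kernel of `f`. When `f` and `g` commute
these two idempotents coincide, so the image and the kernel of `f` are complementary. Over a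
commutative von Neumann regular ring this applies to every multiplication `φ_a`: thus `M = aM ⊕
Ann_M(a)`, and the quotient by the first summand is the second.
-/

theorem isIdempotentElem_mul_of_mul_mul_eq_self {S : Type*} [Semigroup S] {a x : S}
    (h : a * x * a = a) : IsIdempotentElem (a * x) := by
  rw [IsIdempotentElem, ← mul_assoc, h]

section QuasiInverse

variable {R M N : Type*} [Semiring R] [AddCommMonoid M] [AddCommMonoid N] [Module R M] [Module R N]
  {f : M →ₗ[R] N} {g : N →ₗ[R] M}

theorem range_comp_eq_range_of_comp_comp_eq_self (h : f ∘ₗ g ∘ₗ f = f) :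
    LinearMap.range (f ∘ₗ g) = LinearMap.range f := by
  refine le_antisymm (LinearMap.range_comp_le_range g f) ?_
  calc
    LinearMap.range f = LinearMap.range ((f ∘ₗ g) ∘ₗ f) := by rw [LinearMap.comp_assoc, h]
    _ ≤ LinearMap.range (f ∘ₗ g) := LinearMap.range_comp_le_range f (f ∘ₗ g)

theorem ker_comp_eq_ker_of_comp_comp_eq_self (h : f ∘ₗ g ∘ₗ f = f) :
    LinearMap.ker (g ∘ₗ f) = LinearMap.ker f := by
  refine le_antisymm ?_ (LinearMap.ker_le_ker_comp f g)
  calc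
    LinearMap.ker (g ∘ₗ f) ≤ LinearMap.ker (f ∘ₗ g ∘ₗ f) := LinearMap.ker_le_ker_comp (g ∘ₗ f) f
    _ = LinearMap.ker f := by rw [h]

end QuasiInverse

theorem isCompl_range_ker_of_commute_of_mul_mul_eq_self {R M : Type*} [Ring R] [AddCommGroup M]
    [Module R M] {f g : Module.End R M} (hfg : Commute f g) (h : f * g * f = f) :
    IsCompl (LinearMap.range f) (LinearMap.ker f) := by
  have range_eq : LinearMap.range (f * g) = LinearMap.range f :=
    range_comp_eq_range_of_comp_comp_eq_self h
  have ker_eq : LinearMap.ker (f * g) = LinearMap.ker f := by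
    rw [hfg.eq]
    exact ker_comp_eq_ker_of_comp_comp_eq_self h
  rw [← range_eq, ← ker_eq]
  exact LinearMap.IsIdempotentElem.isCompl (isIdempotentElem_mul_of_mul_mul_eq_self h)

section Morphic

variable {R : Type*} [CommRing R] (M : Type*) [AddCommGroup M] [Module R M] {a x : R}

theorem isCompl_range_ker_lsmul_of_mul_mul_eq_self (h : a * x * a = a) :
    IsCompl (LinearMap.range (LinearMap.lsmul R M a)) (LinearMap.ker (LinearMap.lsmul R M a)) := by
  apply isCompl_range_ker_of_commute_of_mul_mul_eq_self (g := LinearMap.lsmul R M x)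
  · exact (Commute.all a x).map (Algebra.lsmul R R M)
  · ext m
    simp only [Module.End.mul_apply, LinearMap.lsmul_apply, ← mul_smul, ← mul_assoc, h]

theorem isAMorphic_of_mul_mul_eq_self (h : a * x * a = a) : IsAMorphic R M a :=
  ⟨Submodule.quotientEquivOfIsCompl _ _ (isCompl_range_ker_lsmul_of_mul_mul_eq_self M h)⟩

end Morphic

theorem stmt_10 (R : Type*) [CommRing R] (hreg : ∀ a : R, ∃ x : R, a = a * x * a)
    (M : Type*) [AddCommGroup M] [Module R M] :
    IsWeaklyMorphic R M := by
  intro a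
  obtain ⟨x, hx⟩ := hreg a
  exact isAMorphic_of_mul_mul_eq_self M hx.symm
end

section
/- Let R be a commutative ring and M an R-module that is kernel-direct (the kernel of every R-module endomorphism of M is a direct summand of M) or image-direct (the image of every R-module endomorphism of M is a direct summand of M). Then M is weakly-morphic if and only if M = aM ⊕ Ann_M(a) (internal direct sum) for every a ∈ R. -/
/-!
An isomorphism `M / aM ≅ Ann_M(a)` yields an endomorphism of `M` with kernel `aM` and image
`Ann_M(a)`. Under either hypothesis, multiplication by `a` and this endomorphism therefore together
make both `aM` and `Ann_M(a)` direct summands. Multiplication by `a` maps a complement `L` of `aM`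
into `aM ∩ L = 0`, so `L ≤ Ann_M(a)` and `aM + Ann_M(a) = M`. If `N` is a complement of `Ann_M(a)`,
then `aM = aN ≤ N`, so `aM ∩ Ann_M(a) = 0`.
-/

section InvariantSubmodules

variable {R M : Type*} [Semiring R] [AddCommMonoid M] [Module R M] {f : Module.End R M}
  {p : Submodule R M}

theorem le_ker_of_disjoint_range (hp : p ∈ f.invtSubmodule) (h : Disjoint (LinearMap.range f) p) :
    p ≤ LinearMap.ker f :=
  fun x hx ↦ Submodule.disjoint_def.mp h (f x) ⟨x, rfl⟩ (hp hx)

theorem range_le_of_codisjoint_ker (hp : p ∈ f.invtSubmodule)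
    (h : Codisjoint (LinearMap.ker f) p) : LinearMap.range f ≤ p := by
  rintro _ ⟨x, rfl⟩
  obtain ⟨k, n, hk, hn, rfl⟩ := Submodule.codisjoint_iff_exists_add_eq.mp h x
  rw [map_add, LinearMap.mem_ker.mp hk, zero_add]
  exact hp hn

theorem isCompl_range_ker_of_isComplemented (hf : ∀ p, p ∈ f.invtSubmodule)
    (hrange : IsComplemented (LinearMap.range f)) (hker : IsComplemented (LinearMap.ker f)) :
    IsCompl (LinearMap.range f) (LinearMap.ker f) := by
  obtain ⟨L, hL⟩ := hrange
  obtain ⟨N, hN⟩ := hker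
  have hrange_le : LinearMap.range f ≤ N := range_le_of_codisjoint_ker (hf N) hN.codisjoint
  have hle_ker : L ≤ LinearMap.ker f := le_ker_of_disjoint_range (hf L) hL.disjoint
  exact ⟨hN.disjoint.symm.mono_left hrange_le, hL.codisjoint.mono_right hle_ker⟩

end InvariantSubmodules

/-- `M` is kernel-direct: the kernel of every endomorphism of `M` is a direct summand. -/
def IsKernelDirect (R M : Type*) [Semiring R] [AddCommMonoid M] [Module R M] : Prop :=
  ∀ φ : M →ₗ[R] M, IsComplemented (LinearMap.ker φ)

/-- `M` is image-direct: the image of every endomorphism of `M` is a direct summand. -/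
def IsImageDirect (R M : Type*) [Semiring R] [AddCommMonoid M] [Module R M] : Prop :=
  ∀ φ : M →ₗ[R] M, IsComplemented (LinearMap.range φ)

theorem exists_linearMap_ker_eq_range_eq {R M M' : Type*} [Ring R] [AddCommGroup M] [Module R M]
    [AddCommGroup M'] [Module R M'] {p : Submodule R M} {q : Submodule R M'} (e : (M ⧸ p) ≃ₗ[R] q) :
    ∃ ψ : M →ₗ[R] M', LinearMap.ker ψ = p ∧ LinearMap.range ψ = q := by
  refine ⟨q.subtype ∘ₗ e.toLinearMap ∘ₗ p.mkQ, ?_, ?_⟩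
  · rw [LinearMap.ker_comp_of_ker_eq_bot _ q.ker_subtype,
      LinearMap.ker_comp_of_ker_eq_bot _ e.ker, p.ker_mkQ]
  · rw [← LinearMap.comp_assoc, LinearMap.range_comp_of_range_eq_top _ p.range_mkQ,
      LinearMap.range_comp_of_range_eq_top _ e.range, q.range_subtype]

section Ring

variable {R M : Type*} [Ring R] [AddCommGroup M] [Module R M]

theorem IsKernelDirect.isComplemented_of_quotientEquiv (h : IsKernelDirect R M)
    {p q : Submodule R M} (e : (M ⧸ p) ≃ₗ[R] q) : IsComplemented p := by
  obtain ⟨ψ, hker, -⟩ := exists_linearMap_ker_eq_range_eq e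
  exact hker ▸ h ψ

theorem IsImageDirect.isComplemented_of_quotientEquiv (h : IsImageDirect R M)
    {p q : Submodule R M} (e : (M ⧸ p) ≃ₗ[R] q) : IsComplemented q := by
  obtain ⟨ψ, -, hrange⟩ := exists_linearMap_ker_eq_range_eq e
  exact hrange ▸ h ψ

theorem stmt_11_general (hdir : IsKernelDirect R M ∨ IsImageDirect R M) {f : Module.End R M}
    (hf : ∀ p, p ∈ f.invtSubmodule) :
    Nonempty ((M ⧸ LinearMap.range f) ≃ₗ[R] LinearMap.ker f) ↔
      IsCompl (LinearMap.range f) (LinearMap.ker f) := by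
  refine ⟨?_, fun h ↦ ⟨Submodule.quotientEquivOfIsCompl _ _ h⟩⟩
  rintro ⟨e⟩
  rcases hdir with hM | hM
  · exact isCompl_range_ker_of_isComplemented hf (hM.isComplemented_of_quotientEquiv e) (hM f)
  · exact isCompl_range_ker_of_isComplemented hf (hM f) (hM.isComplemented_of_quotientEquiv e)

end Ring

theorem stmt_11 (R : Type*) [CommRing R] (M : Type*) [AddCommGroup M] [Module R M]
    (hdir : (∀ φ : M →ₗ[R] M, ∃ N, IsCompl (LinearMap.ker φ) N) ∨
      (∀ φ : M →ₗ[R] M, ∃ N, IsCompl (LinearMap.range φ) N)) :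
    IsWeaklyMorphic R M ↔
      ∀ a : R, IsCompl (LinearMap.range (LinearMap.lsmul R M a))
        (LinearMap.ker (LinearMap.lsmul R M a)) :=
  forall_congr' fun a ↦ stmt_11_general hdir fun p _ hx ↦ p.smul_mem a hx
end

section
/- Let R be a commutative ring and M an R-module in which every submodule is RD-pure, i.e. for every submodule N of M and every a ∈ R, aN = aM ∩ N. Then M is weakly-morphic (indeed M = aM ⊕ Ann_M(a) for every a ∈ R). -/
/-!
Since `f` kills its kernel, purity of `ker f` says `range f ∩ ker f = 0`. Purity of `range f` says
`f² M = f M`: then `f m = f (f m')` puts `m - f m'` in `ker f`, so `M = range f + ker f`.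
-/

/-- `N` is pure along the endomorphism `f` if `f N = f M ∩ N`. Over a commutative ring, `N` is
RD-pure exactly when it is pure along multiplication by every scalar. -/
def IsPureAlong {R M : Type*} [Semiring R] [AddCommMonoid M] [Module R M]
    (f : Module.End R M) (N : Submodule R M) : Prop :=
  N.map f = (⊤ : Submodule R M).map f ⊓ N

theorem isPureAlong_ker_iff_disjoint {R M : Type*} [Semiring R] [AddCommMonoid M] [Module R M]
    {f : Module.End R M} :
    IsPureAlong f (LinearMap.ker f) ↔ Disjoint (LinearMap.range f) (LinearMap.ker f) := by
  have map_ker : (LinearMap.ker f).map f = ⊥ := LinearMap.le_ker_iff_map.1 le_rfl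
  rw [IsPureAlong, map_ker, Submodule.map_top, disjoint_iff, eq_comm]

section Ring

variable {R M : Type*} [Ring R] [AddCommGroup M] [Module R M] {f : Module.End R M}

theorem isPureAlong_range_iff_codisjoint :
    IsPureAlong f (LinearMap.range f) ↔ Codisjoint (LinearMap.range f) (LinearMap.ker f) := by
  rw [IsPureAlong, Submodule.map_top, inf_idem, Submodule.map_eq_range_iff]

theorem isCompl_range_ker_iff_isPureAlong :
    IsCompl (LinearMap.range f) (LinearMap.ker f) ↔
      IsPureAlong f (LinearMap.range f) ∧ IsPureAlong f (LinearMap.ker f) := by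
  rw [isCompl_iff, isPureAlong_range_iff_codisjoint, isPureAlong_ker_iff_disjoint, and_comm]

theorem stmt_13_general (hrange : IsPureAlong f (LinearMap.range f))
    (hker : IsPureAlong f (LinearMap.ker f)) :
    Nonempty ((M ⧸ LinearMap.range f) ≃ₗ[R] LinearMap.ker f) ∧
      IsCompl (LinearMap.range f) (LinearMap.ker f) := by
  have compl := isCompl_range_ker_iff_isPureAlong.2 ⟨hrange, hker⟩
  exact ⟨⟨Submodule.quotientEquivOfIsCompl _ _ compl⟩, compl⟩

end Ring

theorem stmt_13 (R : Type*) [CommRing R] (M : Type*) [AddCommGroup M] [Module R M]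
    (hRD : ∀ (N : Submodule R M) (a : R),
      Submodule.map (LinearMap.lsmul R M a) N =
        Submodule.map (LinearMap.lsmul R M a) ⊤ ⊓ N) :
    IsWeaklyMorphic R M ∧
      ∀ a : R, IsCompl (LinearMap.range (LinearMap.lsmul R M a))
        (LinearMap.ker (LinearMap.lsmul R M a)) :=
  forall_and.1 fun a => stmt_13_general (hRD _ a) (hRD _ a)
end

section
/- Let R be a commutative ring and M a finitely generated multiplication R-module (for each submodule N of M there exists an ideal A of R with N = MA). Then M is weakly-morphic if and only if M is morphic. -/
/-- `M` is a morphic module if `M/φ(M) ≅ ker φ` for every endomorphism `φ` of `M`. -/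
def IsMorphicModule (R : Type*) [CommRing R] (M : Type*) [AddCommGroup M] [Module R M] : Prop :=
  ∀ φ : M →ₗ[R] M, Nonempty ((M ⧸ LinearMap.range φ) ≃ₗ[R] LinearMap.ker φ)

/-!
In a multiplication module every endomorphism `φ` satisfies `φ N ≤ N` for all submodules `N`, since
`φ (A • M) ≤ A • M`; in particular `φ x` is a multiple of `x`. Hence a scalar `a` with
`a • M ≤ R ∙ x` turns `φ` into a homothety `a • φ`. Suppose that the ideal `I` of all `a` for which
`a • φ` is a homothety is proper. Then either `I • M = M`, and Nakayama gives some `a ∉ I` killing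
`M`, or some `x` lies outside `I • M`, and writing `R ∙ x = A • M` gives some `a ∈ A` outside `I`.
Both contradict the choice of `I`, so `φ` itself is a homothety.
-/

/-- `M` is a multiplication module if each of its submodules has the form `A • M` for an ideal `A`
of `R`. The product `MA` is encoded as `A • ⊤`. -/
def IsMultiplicationModule (R : Type*) [CommSemiring R] (M : Type*) [AddCommMonoid M]
    [Module R M] : Prop :=
  ∀ N : Submodule R M, ∃ A : Ideal R, N = A • (⊤ : Submodule R M)

section Semiring

variable {R : Type*} [CommSemiring R] {M : Type*} [AddCommMonoid M] [Module R M]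

theorem IsMultiplicationModule.map_le (hM : IsMultiplicationModule R M) (φ : Module.End R M)
    (N : Submodule R M) : N.map φ ≤ N := by
  obtain ⟨A, rfl⟩ := hM N
  rw [Submodule.map_smul'']
  exact Submodule.smul_mono le_rfl le_top

theorem IsMultiplicationModule.not_colon_span_singleton_le (hM : IsMultiplicationModule R M)
    {I : Ideal R} {x : M} (hx : x ∉ I • (⊤ : Submodule R M)) :
    ¬ (R ∙ x).colon Set.univ ≤ I := by
  obtain ⟨A, hA⟩ := hM (R ∙ x)
  have hA_le : A ≤ (R ∙ x).colon Set.univ := fun a ha ↦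
    Submodule.mem_colon.mpr fun y _ ↦ hA ▸ Submodule.smul_mem_smul ha Submodule.mem_top
  exact fun hI ↦ hx <| Submodule.smul_mono_left (hA_le.trans hI) <|
    hA ▸ Submodule.mem_span_singleton_self x

-- As a submodule of `Module.End R M`, `1` consists of the homotheties.
theorem colon_span_singleton_le_one_colon {φ : Module.End R M} {x : M} (hφ : φ x ∈ R ∙ x) :
    (R ∙ x).colon Set.univ ≤ (1 : Submodule R (Module.End R M)).colon {φ} := by
  intro a ha
  obtain ⟨s, hs⟩ := Submodule.mem_span_singleton.mp hφ
  rw [Submodule.mem_colon_singleton, Submodule.mem_one]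
  refine ⟨s * a, LinearMap.ext fun y ↦ ?_⟩
  obtain ⟨t, ht⟩ := Submodule.mem_span_singleton.mp (Submodule.mem_colon.mp ha y trivial)
  calc (s * a) • y = t • s • x := by rw [mul_smul, ← ht, smul_comm]
    _ = φ (a • y) := by rw [hs, ← map_smul, ht]
    _ = a • φ y := map_smul φ a y

end Semiring

section Ring

variable {R : Type*} [CommRing R] {M : Type*} [AddCommGroup M] [Module R M]

theorem annihilator_sup_eq_top_of_smul_top_eq_top [Module.Finite R M] {I : Ideal R}
    (hIM : I • (⊤ : Submodule R M) = ⊤) : Module.annihilator R M ⊔ I = ⊤ := by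
  obtain ⟨r, hrI, hr⟩ := Submodule.exists_mem_and_smul_eq_self_of_fg_of_le_smul I
    (⊤ : Submodule R M) Module.Finite.fg_top hIM.ge
  have h_ann : 1 - r ∈ Module.annihilator R M := Module.mem_annihilator.mpr fun y ↦ by
    rw [sub_smul, one_smul, hr y Submodule.mem_top, sub_self]
  rw [Ideal.eq_top_iff_one, ← sub_add_cancel 1 r]
  exact Submodule.add_mem_sup h_ann hrI

theorem IsMultiplicationModule.exists_not_colon_span_singleton_le [Module.Finite R M]
    (hM : IsMultiplicationModule R M) {I : Ideal R} (hI : I ≠ ⊤) :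
    ∃ x : M, ¬ (R ∙ x).colon Set.univ ≤ I := by
  by_cases hIM : I • (⊤ : Submodule R M) = ⊤
  · have h_ann_le : Module.annihilator R M ≤ (R ∙ (0 : M)).colon Set.univ := fun a ha ↦
      Submodule.mem_colon.mpr fun y _ ↦ by
        rw [Module.mem_annihilator.mp ha y]
        exact Submodule.zero_mem _
    refine ⟨0, fun hle ↦ hI ?_⟩
    rw [← sup_eq_right.mpr (h_ann_le.trans hle)]
    exact annihilator_sup_eq_top_of_smul_top_eq_top hIM
  · obtain ⟨x, hx⟩ : ∃ x, x ∉ I • (⊤ : Submodule R M) := by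
      simpa only [Submodule.eq_top_iff', not_forall] using hIM
    exact ⟨x, hM.not_colon_span_singleton_le hx⟩

theorem IsMultiplicationModule.lsmul_surjective [Module.Finite R M]
    (hM : IsMultiplicationModule R M) : Function.Surjective (LinearMap.lsmul R M) := by
  intro φ
  have h_colon : (1 : Submodule R (Module.End R M)).colon {φ} = ⊤ := by
    by_contra h_ne
    obtain ⟨x, hx⟩ := hM.exists_not_colon_span_singleton_le h_ne
    have hφx : φ x ∈ R ∙ x :=
      hM.map_le φ _ (Submodule.mem_map_of_mem (Submodule.mem_span_singleton_self x))
    exact hx (colon_span_singleton_le_one_colon hφx)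
  rw [Submodule.colon_eq_top_iff_subset, Set.singleton_subset_iff] at h_colon
  exact Submodule.mem_one.mp h_colon

theorem isWeaklyMorphic_iff_isMorphicModule_of_lsmul_surjective
    (h : Function.Surjective (LinearMap.lsmul R M)) :
    IsWeaklyMorphic R M ↔ IsMorphicModule R M :=
  (h.forall (p := fun φ ↦ Nonempty ((M ⧸ LinearMap.range φ) ≃ₗ[R] LinearMap.ker φ))).symm

end Ring

theorem stmt_14 (R : Type*) [CommRing R] (M : Type*) [AddCommGroup M] [Module R M]
    [Module.Finite R M]
    (hmul : ∀ N : Submodule R M, ∃ A : Ideal R, N = A • (⊤ : Submodule R M)) :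
    IsWeaklyMorphic R M ↔ IsMorphicModule R M :=
  isWeaklyMorphic_iff_isMorphicModule_of_lsmul_surjective
    (IsMultiplicationModule.lsmul_surjective hmul)
end

section
/- Let R be a commutative ring and M an R-module that is a duo module (every submodule N of M is fully invariant, i.e. φ(N) ⊆ N for every R-module endomorphism φ of M) and whose endomorphism ring End_R(M) is von Neumann regular (for every φ there exists ψ with φ = φ ∘ ψ ∘ φ). Then M is morphic. -/
/-!
If `φ = φψφ`, then `φψ` and `ψφ` are idempotent. An idempotent whose image and kernel are fully
invariant is central, so both commute with `φ`, and this forces `φψ = ψφ`. This single idempotent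
has the image and the kernel of `φ`, whence `M = φ(M) ⊕ ker φ`.
-/

section Semigroup

variable {S : Type*} [Semigroup S] {a b : S}

theorem isIdempotentElem_mul_right_of_mul_mul_eq_self (h : a * b * a = a) :
    IsIdempotentElem (a * b) := by
  rw [IsIdempotentElem, ← mul_assoc, h]

theorem isIdempotentElem_mul_left_of_mul_mul_eq_self (h : a * b * a = a) :
    IsIdempotentElem (b * a) := by
  rw [IsIdempotentElem, mul_assoc, ← mul_assoc a, h]

theorem commute_of_mul_mul_eq_self (h : a * b * a = a)
    (hab : Commute (a * b) a) (hba : Commute (b * a) a) : Commute a b :=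
  calc
    a * b = b * a * a * b := by rw [hba.eq, ← mul_assoc, h]
    _ = b * (a * (a * b)) := by simp only [mul_assoc]
    _ = b * a := by rw [← hab.eq, h]

end Semigroup

section Ring

variable {R M : Type*} [Ring R] [AddCommGroup M] [Module R M]

theorem commute_of_isIdempotentElem_of_isFullyInvariant
    (hM : ∀ N : Submodule R M, IsComplemented N → N.IsFullyInvariant)
    {e : Module.End R M} (he : IsIdempotentElem e) (φ : Module.End R M) : Commute e φ :=
  have hcompl := LinearMap.IsIdempotentElem.isCompl he
  (LinearMap.IsIdempotentElem.commute_iff he).2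
    ⟨hM _ ⟨_, hcompl⟩ φ, hM _ ⟨_, hcompl.symm⟩ φ⟩

theorem isCompl_range_ker_of_commute {φ ψ : Module.End R M} (h : φ * ψ * φ = φ)
    (hcomm : Commute φ ψ) : IsCompl (LinearMap.range φ) (LinearMap.ker φ) := by
  have hidem : IsIdempotentElem (φ * ψ) :=
    isIdempotentElem_mul_right_of_mul_mul_eq_self h
  have hrange : LinearMap.range (φ * ψ) = LinearMap.range φ := by
    refine le_antisymm (LinearMap.range_comp_le_range ψ φ) ?_
    simpa only [← Module.End.mul_eq_comp, h] using LinearMap.range_comp_le_range φ (φ * ψ)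
  have hker : LinearMap.ker (φ * ψ) = LinearMap.ker φ := by
    rw [hcomm.eq]
    refine le_antisymm ?_ (LinearMap.ker_le_ker_comp φ ψ)
    simpa only [← Module.End.mul_eq_comp, ← mul_assoc, h] using
      LinearMap.ker_le_ker_comp (ψ * φ) φ
  simpa only [hrange, hker] using LinearMap.IsIdempotentElem.isCompl hidem

theorem stmt_15_general
    (hM : ∀ N : Submodule R M, IsComplemented N → N.IsFullyInvariant)
    (hreg : ∀ φ : M →ₗ[R] M, ∃ ψ : M →ₗ[R] M, φ = φ ∘ₗ ψ ∘ₗ φ) (φ : M →ₗ[R] M) :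
    Nonempty ((M ⧸ LinearMap.range φ) ≃ₗ[R] LinearMap.ker φ) := by
  obtain ⟨ψ, hψ⟩ := hreg φ
  have h : φ * ψ * φ = φ := hψ.symm
  have hcomm : Commute φ ψ := commute_of_mul_mul_eq_self h
    (commute_of_isIdempotentElem_of_isFullyInvariant hM
      (isIdempotentElem_mul_right_of_mul_mul_eq_self h) φ)
    (commute_of_isIdempotentElem_of_isFullyInvariant hM
      (isIdempotentElem_mul_left_of_mul_mul_eq_self h) φ)
  exact ⟨Submodule.quotientEquivOfIsCompl _ _ (isCompl_range_ker_of_commute h hcomm)⟩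

end Ring

theorem stmt_15 (R : Type*) [CommRing R] (M : Type*) [AddCommGroup M] [Module R M]
    (hduo : ∀ (N : Submodule R M) (φ : M →ₗ[R] M), N.map φ ≤ N)
    (hreg : ∀ φ : M →ₗ[R] M, ∃ ψ : M →ₗ[R] M, φ = φ ∘ₗ ψ ∘ₗ φ) :
    IsMorphicModule R M :=
  stmt_15_general (fun N _ φ => Submodule.map_le_iff_le_comap.1 (hduo N φ)) hreg
end

section
/- Let D be a principal ideal domain and M = ⊕_{i∈I} M_i a nonzero direct sum of finitely generated torsion-free D-modules M_i. Then D is a morphic ring if and only if M is a weakly-morphic D-module. -/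
/-!
Over a domain, multiplication by `a ≠ 0` is injective on a torsion-free module `N`, so `N` is
`a`-morphic exactly when `aN = N`. Then also `aP = P` for every quotient `P` of `N`, and if `P` is
finite and faithful, Nakayama's lemma makes `a` a unit. Hence a torsion-free module with a finite
faithful quotient is weakly-morphic exactly when the ring is a field. The ring itself is such a
module, and so is the direct sum, through its projection onto a nonzero summand.
-/

section Morphic

variable {R N : Type*} [CommRing R] [AddCommGroup N] [Module R N]

lemma isAMorphic_zero : IsAMorphic R N 0 := by
  rw [IsAMorphic, map_zero, LinearMap.range_zero, LinearMap.ker_zero]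
  exact ⟨(Submodule.quotEquivOfEqBot ⊥ rfl).trans Submodule.topEquiv.symm⟩

lemma isAMorphic_iff_smul_surjective {a : R} (ha : IsSMulRegular N a) :
    IsAMorphic R N a ↔ Function.Surjective (a • · : N → N) := by
  have ker_subsingleton : Subsingleton (LinearMap.ker (LinearMap.lsmul R N a)) :=
    Submodule.subsingleton_iff_eq_bot.2 ((isSMulRegular_iff_ker_lsmul_eq_bot N a).1 ha)
  calc IsAMorphic R N a
      ↔ Subsingleton (N ⧸ LinearMap.range (LinearMap.lsmul R N a)) :=
        ⟨fun ⟨e⟩ ↦ e.toEquiv.subsingleton, fun _ ↦ ⟨0⟩⟩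
    _ ↔ LinearMap.range (LinearMap.lsmul R N a) = ⊤ := Submodule.Quotient.subsingleton_iff
    _ ↔ Function.Surjective (a • · : N → N) := LinearMap.range_eq_top

lemma isWeaklyMorphic_of_isField (hR : IsField R) : IsWeaklyMorphic R N := by
  intro a
  obtain rfl | ha := eq_or_ne a 0
  · exact isAMorphic_zero
  · obtain ⟨b, hab⟩ := hR.mul_inv_cancel ha
    have a_unit : IsUnit a := .of_mul_eq_one b hab
    exact (isAMorphic_iff_smul_surjective (a_unit.isSMulRegular N)).2
      a_unit.smul_bijective.surjective

end Morphic

lemma smul_surjective_of_surjective {R N P : Type*} [Semiring R] [AddCommMonoid N] [Module R N]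
    [AddCommMonoid P] [Module R P] {f : N →ₗ[R] P} (hf : Function.Surjective f) {a : R}
    (ha : Function.Surjective (a • · : N → N)) : Function.Surjective (a • · : P → P) :=
  .of_comp (g := f) <| by simpa only [Function.comp_def, map_smul] using hf.comp ha

section FiniteQuotient

variable {R N P : Type*} [CommRing R] [AddCommGroup N] [Module R N] [AddCommGroup P] [Module R P]

lemma isUnit_of_smul_surjective [Module.Finite R P] [FaithfulSMul R P] {a : R}
    (ha : Function.Surjective (a • · : P → P)) : IsUnit a := by
  have top_le : (⊤ : Submodule R P) ≤ Ideal.span {a} • ⊤ := by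
    intro p _
    obtain ⟨q, rfl⟩ := ha p
    exact Submodule.smul_mem_smul (Ideal.mem_span_singleton_self a) Submodule.mem_top
  obtain ⟨r, hr, smul_eq_self⟩ :=
    Submodule.exists_mem_and_smul_eq_self_of_fg_of_le_smul _ _ Module.Finite.fg_top top_le
  have r_eq_one : r = 1 := FaithfulSMul.eq_of_smul_eq_smul fun p : P ↦ by
    rw [smul_eq_self p Submodule.mem_top, one_smul]
  exact isUnit_of_dvd_one (Ideal.mem_span_singleton.1 (r_eq_one ▸ hr))

variable [IsDomain R] [Module.IsTorsionFree R N] [Module.Finite R P] [FaithfulSMul R P]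

lemma isWeaklyMorphic_iff_isField {f : N →ₗ[R] P} (hf : Function.Surjective f) :
    IsWeaklyMorphic R N ↔ IsField R := by
  refine ⟨fun hN ↦ ?_, isWeaklyMorphic_of_isField⟩
  refine ⟨exists_pair_ne R, mul_comm, fun {a} ha ↦ IsUnit.exists_right_inv ?_⟩
  have a_regular : IsSMulRegular N a := (IsRegular.of_ne_zero ha).isSMulRegular
  have a_divides : Function.Surjective (a • · : N → N) :=
    (isAMorphic_iff_smul_surjective a_regular).1 (hN a)
  exact isUnit_of_smul_surjective (smul_surjective_of_surjective hf a_divides)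

theorem stmt_19_general {f : N →ₗ[R] P} (hf : Function.Surjective f) :
    (∀ a : R, IsAMorphic R R a) ↔ IsWeaklyMorphic R N :=
  (isWeaklyMorphic_iff_isField (f := LinearMap.id (R := R) (M := R)) Function.surjective_id).trans
    (isWeaklyMorphic_iff_isField hf).symm

end FiniteQuotient

lemma faithfulSMul_of_isTorsionFree (R N : Type*) [Ring R] [IsCancelMulZero R] [AddCommGroup N]
    [Module R N] [Module.IsTorsionFree R N] [Nontrivial N] : FaithfulSMul R N where
  eq_of_smul_eq_smul h :=
    let ⟨_, hx⟩ := exists_ne (0 : N)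
    smul_left_injective R hx (h _)

section DirectSum

variable {I : Type*} (M : I → Type*)

lemma exists_nontrivial_of_nontrivial_directSum [∀ i, AddCommMonoid (M i)]
    [Nontrivial (DirectSum I M)] : ∃ i, Nontrivial (M i) := by
  by_contra! summands_subsingleton
  exact not_subsingleton (DirectSum I M) inferInstance

lemma isTorsionFree_directSum (R : Type*) [Semiring R] [∀ i, AddCommMonoid (M i)]
    [∀ i, Module R (M i)] [∀ i, Module.IsTorsionFree R (M i)] :
    Module.IsTorsionFree R (DirectSum I M) :=
  DFunLike.coe_injective.moduleIsTorsionFree _ fun _ _ ↦ rfl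

lemma directSum_component_surjective (R : Type*) [Semiring R] [∀ i, AddCommMonoid (M i)]
    [∀ i, Module R (M i)] (i : I) : Function.Surjective (DirectSum.component R I M i) := by
  classical
  exact fun m ↦ ⟨DirectSum.lof R I M i m, DirectSum.component.lof_self R i m⟩

end DirectSum

theorem stmt_19 (D : Type*) [CommRing D] [IsDomain D] [IsPrincipalIdealRing D]
    (I : Type*) [DecidableEq I]
    (M : I → Type*) [∀ i, AddCommGroup (M i)] [∀ i, Module D (M i)]
    [∀ i, Module.Finite D (M i)]
    (htf : ∀ i (m : M i) (a : D), a • m = 0 → m = 0 ∨ a = 0)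
    [Nontrivial (DirectSum I M)] :
    (∀ a : D, IsAMorphic D D a) ↔ IsWeaklyMorphic D (DirectSum I M) := by
  have (i : I) : Module.IsTorsionFree D (M i) := .of_smul_eq_zero fun a m h ↦ (htf i m a h).symm
  have := isTorsionFree_directSum M D
  obtain ⟨i, _⟩ := exists_nontrivial_of_nontrivial_directSum M
  have := faithfulSMul_of_isTorsionFree D (M i)
  exact stmt_19_general (directSum_component_surjective M D i)
end
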